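/- Let d ≥ 3 and let Ψ be a random vector with the uniform distribution on the sphere of radius √d centered at the origin in ℝ^d. Then there exists an absolute constant C > 0 such that for all unit vectors u, v ∈ ℝ^d: C^{-1}·‖u − v‖² ≤ E[|u'Ψ|·1(sgn(u'Ψ) ≠ sgn(v'Ψ))] ≤ √2·‖u − v‖². -/

import Mathlib

open MeasureTheory Matrix

noncomputable section

/-- The Euclidean norm of a vector in `Fin d → ℝ`. -/
def eNorm {d : ℕ} (x : Fin d → ℝ) : ℝ := Real.sqrt (∑ i, x i ^ 2)

/-- `F` is the uniform (rotation-invariant) probability distribution on the sphere of radius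
`√d` centered at the origin in `ℝ^d`. -/
def IsUniformOnSphere (d : ℕ) (F : Measure (Fin d → ℝ)) : Prop :=
  IsProbabilityMeasure F ∧
    F {x | ∑ i, x i ^ 2 = (d : ℝ)} = 1 ∧
    ∀ O : Matrix (Fin d) (Fin d) ℝ, Oᵀ * O = 1 → F.map (fun x => O *ᵥ x) = F

/-!
Up to a factor of two, `|a| · 1(sgn a ≠ sgn b)` equals `|a| - a sgn b`. Reflecting in the line
spanned by `v` shows that `E[⟪u, Ψ⟫ sgn ⟪v, Ψ⟫] = ⟪u, v⟫ E|⟪v, Ψ⟫|` for unit vectors, so the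
expectation in question is `(1 - ⟪u, v⟫) E|⟪u, Ψ⟫| = ‖u - v‖² / 2 · E|⟪u, Ψ⟫|` up to the same
factor. The first absolute moment is at most `1` because the second moment of `⟪u, Ψ⟫` is `1`, and
it is bounded below because the fourth moment `3d / (d + 2)` is at most `3`: rotation invariance
determines both moments through `‖Ψ‖² = d`.
-/

open Module
open scoped RealInnerProductSpace

section SignMismatch

/-- The loss `|a| · 1(sgn a ≠ sgn b)` incurred when `sgn b` is used to predict the sign of `a`.
The three values of `Real.sign` are kept apart, so `signMismatch a 0 = |a|`. -/
def signMismatch (a b : ℝ) : ℝ := |a| * if Real.sign a = Real.sign b then 0 else 1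

lemma mul_realSign_self (a : ℝ) : a * Real.sign a = |a| := by
  rcases lt_trichotomy a 0 with ha | rfl | ha
  · rw [Real.sign_of_neg ha, abs_of_neg ha, mul_neg_one]
  · simp
  · rw [Real.sign_of_pos ha, abs_of_pos ha, mul_one]

lemma norm_realSign_le_one (a : ℝ) : ‖Real.sign a‖ ≤ 1 := by
  rcases Real.sign_apply_eq a with h | h | h <;> simp [h]

lemma mul_realSign_le_abs (a b : ℝ) : a * Real.sign b ≤ |a| :=
  calc a * Real.sign b ≤ |a| * |Real.sign b| := (le_abs_self _).trans (abs_mul a _).le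
    _ ≤ |a| := mul_le_of_le_one_right (abs_nonneg a) (norm_realSign_le_one b)

lemma mul_realSign_nonpos_of_ne {a b : ℝ} (hab : Real.sign a ≠ Real.sign b) :
    a * Real.sign b ≤ 0 := by
  rcases lt_trichotomy a 0 with ha | rfl | ha
  · rw [Real.sign_of_neg ha] at hab
    rcases Real.sign_apply_eq b with hb | hb | hb
    · exact absurd hb.symm hab
    · simp [hb]
    · simpa [hb] using ha.le
  · simp
  · rw [Real.sign_of_pos ha] at hab
    rcases Real.sign_apply_eq b with hb | hb | hb
    · simpa [hb] using ha.le
    · simp [hb]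
    · exact absurd hb.symm hab

lemma measurable_realSign : Measurable Real.sign :=
  Measurable.ite measurableSet_Iio measurable_const
    (Measurable.ite measurableSet_Ioi measurable_const measurable_const)

lemma signMismatch_le (a b : ℝ) : signMismatch a b ≤ |a| - a * Real.sign b := by
  unfold signMismatch
  split_ifs with hab
  · rw [mul_zero, ← hab, mul_realSign_self, sub_self]
  · linarith [mul_realSign_nonpos_of_ne hab]

lemma le_two_mul_signMismatch (a b : ℝ) : |a| - a * Real.sign b ≤ 2 * signMismatch a b := by
  unfold signMismatch
  split_ifs with hab
  · rw [← hab, mul_realSign_self, sub_self, mul_zero, mul_zero]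
  · linarith [mul_realSign_le_abs (-a) b, abs_neg a]

lemma abs_signMismatch_le (a b : ℝ) : |signMismatch a b| ≤ |a| := by
  unfold signMismatch
  split_ifs <;> simp

lemma measurable_signMismatch : Measurable fun p : ℝ × ℝ => signMismatch p.1 p.2 :=
  measurable_fst.abs.mul <| Measurable.ite
    (measurableSet_eq_fun (measurable_realSign.comp measurable_fst)
      (measurable_realSign.comp measurable_snd)) measurable_const measurable_const

end SignMismatch

section AbsoluteMoment

variable {Ω : Type*} [MeasurableSpace Ω] {μ : Measure Ω} {X : Ω → ℝ}

lemma integrable_pow_of_memLp {k : ℕ} (hX : MemLp X k μ) (hk : k ≠ 0) :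
    Integrable (fun ω => X ω ^ k) μ :=
  (integrable_norm_iff (hX.1.pow k)).1 <| by simpa using hX.integrable_norm_pow hk

lemma sq_integral_abs_le [IsProbabilityMeasure μ] (hX : MemLp X 2 μ) :
    (∫ ω, |X ω| ∂μ) ^ 2 ≤ ∫ ω, X ω ^ 2 ∂μ := by
  have h := ProbabilityTheory.variance_nonneg |X| μ
  rw [ProbabilityTheory.variance_eq_sub hX.abs] at h
  simpa [sub_nonneg] using h

-- Integrate `|X| (|X| - s)² (|X| + 2s) ≥ 0`.
lemma three_mul_sq_mul_integral_sq_le (h1 : Integrable X μ)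
    (h2 : Integrable (fun ω => X ω ^ 2) μ) (h4 : Integrable (fun ω => X ω ^ 4) μ)
    {s : ℝ} (hs : 0 ≤ s) :
    3 * s ^ 2 * ∫ ω, X ω ^ 2 ∂μ ≤ 2 * s ^ 3 * ∫ ω, |X ω| ∂μ + ∫ ω, X ω ^ 4 ∂μ := by
  have pointwise (a : ℝ) : 3 * s ^ 2 * a ^ 2 ≤ 2 * s ^ 3 * |a| + a ^ 4 := by
    have : 0 ≤ |a| * ((|a| - s) ^ 2 * (|a| + 2 * s)) := by positivity
    rw [← sq_abs a, ← Even.pow_abs (by decide : Even 4) a]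
    linarith
  rw [← integral_const_mul, ← integral_const_mul, ← integral_add (h1.abs.const_mul _) h4]
  exact integral_mono (h2.const_mul _) ((h1.abs.const_mul _).add h4) fun ω => pointwise (X ω)

lemma integral_sq_pow_three_le (h1 : Integrable X μ) (h2 : Integrable (fun ω => X ω ^ 2) μ)
    (h4 : Integrable (fun ω => X ω ^ 4) μ) :
    (∫ ω, X ω ^ 2 ∂μ) ^ 3 ≤ (∫ ω, |X ω| ∂μ) ^ 2 * ∫ ω, X ω ^ 4 ∂μ := by
  have h0 : 0 ≤ ∫ ω, |X ω| ∂μ := integral_nonneg fun ω => abs_nonneg (X ω)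
  rcases h0.eq_or_lt' with h0 | hpos
  · have hX : ∀ᵐ ω ∂μ, |X ω| = 0 :=
      (integral_eq_zero_iff_of_nonneg (fun ω => abs_nonneg (X ω)) h1.abs).1 h0
    have hX2 : ∫ ω, X ω ^ 2 ∂μ = 0 :=
      integral_eq_zero_of_ae (hX.mono fun ω hω => by simp [abs_eq_zero.1 hω])
    rw [hX2, h0]
    simp
  · have hsq : 0 ≤ ∫ ω, X ω ^ 2 ∂μ := integral_nonneg fun ω => sq_nonneg (X ω)
    -- The choice `s = E[X²] / E|X|` is optimal.
    have h := three_mul_sq_mul_integral_sq_le h1 h2 h4 (div_nonneg hsq hpos.le)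
    field_simp at h
    linarith

end AbsoluteMoment

section InnerIntegrability

lemma memLp_id_of_ae_norm_sq_eq {E : Type*} [NormedAddCommGroup E] [MeasurableSpace E]
    [OpensMeasurableSpace E] [SecondCountableTopology E] {F : Measure E} [IsFiniteMeasure F]
    {r : ℝ} (hr : ∀ᵐ x ∂F, ‖x‖ ^ 2 = r) (p : ENNReal) :
    MemLp id p F :=
  MemLp.of_bound continuous_id.aestronglyMeasurable (√r) <| hr.mono fun x hx => by
    rw [← hx, Real.sqrt_sq (norm_nonneg x), id]

variable {E : Type*} [NormedAddCommGroup E] [InnerProductSpace ℝ E]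

lemma inner_sq_mul_inner_sq (u v x : E) : ⟪u, x⟫ ^ 2 * ⟪v, x⟫ ^ 2 =
    (⟪u + v, x⟫ ^ 4 + ⟪u - v, x⟫ ^ 4 - (2 * ⟪u, x⟫ ^ 4 + 2 * ⟪v, x⟫ ^ 4)) / 12 := by
  rw [inner_add_left, inner_sub_left]
  ring

variable [MeasurableSpace E] {F : Measure E}

lemma integrable_inner (hint : Integrable id F) (u : E) : Integrable (fun x => ⟪u, x⟫) F :=
  hint.const_inner u

lemma integrable_inner_pow {k : ℕ} (hint : MemLp id k F) (hk : k ≠ 0) (u : E) :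
    Integrable (fun x => ⟪u, x⟫ ^ k) F :=
  integrable_pow_of_memLp (hint.const_inner u) hk

lemma integrable_inner_sq_mul_inner_sq (hint : MemLp id 4 F) (u v : E) :
    Integrable (fun x => ⟪u, x⟫ ^ 2 * ⟪v, x⟫ ^ 2) F := by
  have h4 := integrable_inner_pow hint four_ne_zero
  simp only [inner_sq_mul_inner_sq]
  exact (((h4 _).add (h4 _)).sub (((h4 u).const_mul 2).add ((h4 v).const_mul 2))).div_const 12

variable [OpensMeasurableSpace E]

lemma measurable_inner_right (u : E) : Measurable fun x => ⟪u, x⟫ :=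
  (continuous_const.inner continuous_id).measurable

lemma integrable_inner_mul_realSign_inner (hint : Integrable id F) (u v : E) :
    Integrable (fun x => ⟪u, x⟫ * Real.sign ⟪v, x⟫) F :=
  (integrable_inner hint u).mul_bdd
    (measurable_realSign.comp (measurable_inner_right v)).aestronglyMeasurable
    (ae_of_all _ fun _ => norm_realSign_le_one _)

lemma measurable_signMismatch_inner (u v : E) : Measurable fun x => signMismatch ⟪u, x⟫ ⟪v, x⟫ :=
  measurable_signMismatch.comp ((measurable_inner_right u).prodMk (measurable_inner_right v))

lemma integrable_signMismatch_inner (hint : Integrable id F) (u v : E) :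
    Integrable (fun x => signMismatch ⟪u, x⟫ ⟪v, x⟫) F :=
  (integrable_inner hint u).mono (measurable_signMismatch_inner u v).aestronglyMeasurable
    (ae_of_all _ fun _ => abs_signMismatch_le _ _)

end InnerIntegrability

section RotationInvariant

variable {E : Type*} [NormedAddCommGroup E] [InnerProductSpace ℝ E] [MeasurableSpace E]

/-- A measure on a real inner product space is rotation-invariant if every linear isometric
automorphism, orientation-preserving or not, maps it to itself. -/
def IsRotationInvariant (F : Measure E) : Prop := ∀ L : E ≃ₗᵢ[ℝ] E, F.map L = F

namespace IsRotationInvariant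

variable [BorelSpace E] {F : Measure E} {G : Type*} [NormedAddCommGroup G] [NormedSpace ℝ G]

lemma integral_comp (hF : IsRotationInvariant F) (L : E ≃ₗᵢ[ℝ] E) (g : E → G) :
    ∫ x, g (L x) ∂F = ∫ x, g x ∂F := by
  conv_rhs => rw [← hF L]
  exact (L.toHomeomorph.measurableEmbedding.integral_map g).symm

lemma integral_comp_inner_eq_of_norm_eq (hF : IsRotationInvariant F) {u v : E} (huv : ‖u‖ = ‖v‖)
    (g : ℝ → G) : ∫ x, g ⟪u, x⟫ ∂F = ∫ x, g ⟪v, x⟫ ∂F := by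
  let R := (ℝ ∙ (u - v))ᗮ.reflection
  have hR (x : E) : ⟪u, R x⟫ = ⟪v, x⟫ := by
    rw [← R.inner_map_map, Submodule.reflection_sub huv, Submodule.reflection_reflection]
  rw [← hF.integral_comp R fun x => g ⟪u, x⟫]
  simp only [hR]

lemma norm_pow_mul_integral_inner_pow (hF : IsRotationInvariant F) (u v : E) (k : ℕ) :
    ‖v‖ ^ k * ∫ x, ⟪u, x⟫ ^ k ∂F = ‖u‖ ^ k * ∫ x, ⟪v, x⟫ ^ k ∂F := by
  have := hF.integral_comp_inner_eq_of_norm_eq (u := ‖v‖ • u) (v := ‖u‖ • v)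
    (by simp only [norm_smul, norm_norm, mul_comm]) (· ^ k)
  simpa only [real_inner_smul_left, mul_pow, integral_const_mul] using this

-- The reflection in the line `ℝ v` fixes `⟪v, x⟫` and maps `⟪u, x⟫` to
-- `2 (⟪u, v⟫ / ‖v‖²) ⟪v, x⟫ - ⟪u, x⟫`.
lemma integral_inner_mul_realSign_inner (hF : IsRotationInvariant F) (hint : Integrable id F)
    (u v : E) :
    ∫ x, ⟪u, x⟫ * Real.sign ⟪v, x⟫ ∂F = ⟪u, v⟫ / ‖v‖ ^ 2 * ∫ x, |⟪v, x⟫| ∂F := by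
  let R := (ℝ ∙ v).reflection
  have hv (x : E) : ⟪v, R x⟫ = ⟪v, x⟫ := by
    rw [← R.inner_map_map, Submodule.reflection_reflection,
      Submodule.reflection_mem_subspace_eq_self (Submodule.mem_span_singleton_self v)]
  have hu (x : E) : ⟪u, R x⟫ = 2 * (⟪u, v⟫ / ‖v‖ ^ 2) * ⟪v, x⟫ - ⟪u, x⟫ := by
    rw [Submodule.reflection_singleton_apply, inner_sub_right, two_smul, inner_add_right,
      real_inner_smul_right]
    simp only [RCLike.ofReal_real_eq_id, id_eq]
    ring
  have hR (x : E) : ⟪u, R x⟫ * Real.sign ⟪v, R x⟫ =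
      2 * (⟪u, v⟫ / ‖v‖ ^ 2) * |⟪v, x⟫| - ⟪u, x⟫ * Real.sign ⟪v, x⟫ := by
    rw [hu, hv, sub_mul, mul_assoc, mul_realSign_self]
  have h := hF.integral_comp R fun x => ⟪u, x⟫ * Real.sign ⟪v, x⟫
  simp only [hR] at h
  rw [integral_sub ((integrable_inner hint v).abs.const_mul _)
    (integrable_inner_mul_realSign_inner hint u v), integral_const_mul] at h
  linarith

lemma integral_abs_inner_sub_mul_realSign_inner (hF : IsRotationInvariant F)
    (hint : Integrable id F) {u v : E} (hu : ‖u‖ = 1) (hv : ‖v‖ = 1) :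
    ∫ x, (|⟪u, x⟫| - ⟪u, x⟫ * Real.sign ⟪v, x⟫) ∂F = ‖u - v‖ ^ 2 / 2 * ∫ x, |⟪u, x⟫| ∂F := by
  rw [integral_sub (integrable_inner hint u).abs (integrable_inner_mul_realSign_inner hint u v),
    hF.integral_inner_mul_realSign_inner hint,
    hF.integral_comp_inner_eq_of_norm_eq (hv.trans hu.symm) abs, norm_sub_sq_real, hu, hv]
  ring

lemma integral_signMismatch_inner_le (hF : IsRotationInvariant F) (hint : Integrable id F)
    {u v : E} (hu : ‖u‖ = 1) (hv : ‖v‖ = 1) :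
    ∫ x, signMismatch ⟪u, x⟫ ⟪v, x⟫ ∂F ≤ ‖u - v‖ ^ 2 / 2 * ∫ x, |⟪u, x⟫| ∂F := by
  rw [← hF.integral_abs_inner_sub_mul_realSign_inner hint hu hv]
  exact integral_mono (integrable_signMismatch_inner hint u v)
    ((integrable_inner hint u).abs.sub (integrable_inner_mul_realSign_inner hint u v))
    fun x => signMismatch_le _ _

lemma le_two_mul_integral_signMismatch_inner (hF : IsRotationInvariant F)
    (hint : Integrable id F) {u v : E} (hu : ‖u‖ = 1) (hv : ‖v‖ = 1) :
    ‖u - v‖ ^ 2 / 2 * ∫ x, |⟪u, x⟫| ∂F ≤ 2 * ∫ x, signMismatch ⟪u, x⟫ ⟪v, x⟫ ∂F := by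
  rw [← hF.integral_abs_inner_sub_mul_realSign_inner hint hu hv, ← integral_const_mul]
  exact integral_mono
    ((integrable_inner hint u).abs.sub (integrable_inner_mul_realSign_inner hint u v))
    ((integrable_signMismatch_inner hint u v).const_mul 2)
    fun x => le_two_mul_signMismatch _ _

lemma norm_sq_mul_integral_norm_sq [FiniteDimensional ℝ E] (hF : IsRotationInvariant F)
    (hint : MemLp id 2 F) (u : E) :
    ‖u‖ ^ 2 * ∫ x, ‖x‖ ^ 2 ∂F = finrank ℝ E * ∫ x, ⟪u, x⟫ ^ 2 ∂F := by
  let b := stdOrthonormalBasis ℝ E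
  calc ‖u‖ ^ 2 * ∫ x, ‖x‖ ^ 2 ∂F
      = ∑ i, ‖u‖ ^ 2 * ∫ x, ⟪b i, x⟫ ^ 2 ∂F := by
        simp only [← b.sum_sq_inner_right]
        rw [integral_finsetSum _ fun i _ => integrable_inner_pow hint two_ne_zero (b i),
          Finset.mul_sum]
    _ = ∑ i, ‖b i‖ ^ 2 * ∫ x, ⟪u, x⟫ ^ 2 ∂F :=
        Finset.sum_congr rfl fun i _ => hF.norm_pow_mul_integral_inner_pow (b i) u 2
    _ = finrank ℝ E * ∫ x, ⟪u, x⟫ ^ 2 ∂F := by simp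

lemma integral_inner_sq_mul_inner_sq (hF : IsRotationInvariant F) (hint : MemLp id 4 F)
    (u v w : E) :
    3 * ‖w‖ ^ 4 * ∫ x, ⟪u, x⟫ ^ 2 * ⟪v, x⟫ ^ 2 ∂F =
      (‖u‖ ^ 2 * ‖v‖ ^ 2 + 2 * ⟪u, v⟫ ^ 2) * ∫ x, ⟪w, x⟫ ^ 4 ∂F := by
  have h4 := integrable_inner_pow hint four_ne_zero
  have polarization : ∫ x, ⟪u, x⟫ ^ 2 * ⟪v, x⟫ ^ 2 ∂F =
      (∫ x, ⟪u + v, x⟫ ^ 4 ∂F + ∫ x, ⟪u - v, x⟫ ^ 4 ∂F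
        - (2 * ∫ x, ⟪u, x⟫ ^ 4 ∂F + 2 * ∫ x, ⟪v, x⟫ ^ 4 ∂F)) / 12 := by
    have hsum : Integrable (fun x => ⟪u + v, x⟫ ^ 4 + ⟪u - v, x⟫ ^ 4) F := (h4 _).add (h4 _)
    have hsum' : Integrable (fun x => 2 * ⟪u, x⟫ ^ 4 + 2 * ⟪v, x⟫ ^ 4) F :=
      ((h4 u).const_mul 2).add ((h4 v).const_mul 2)
    simp only [inner_sq_mul_inner_sq]
    rw [integral_div, integral_sub hsum hsum', integral_add (h4 _) (h4 _),
      integral_add ((h4 u).const_mul 2) ((h4 v).const_mul 2), integral_const_mul,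
      integral_const_mul]
  have hadd : ‖u + v‖ ^ 4 = (‖u‖ ^ 2 + 2 * ⟪u, v⟫ + ‖v‖ ^ 2) ^ 2 := by
    rw [← norm_add_sq_real]; ring
  have hsub : ‖u - v‖ ^ 4 = (‖u‖ ^ 2 - 2 * ⟪u, v⟫ + ‖v‖ ^ 2) ^ 2 := by
    rw [← norm_sub_sq_real]; ring
  have scale (y : E) := hF.norm_pow_mul_integral_inner_pow y w 4
  have h := scale (u + v)
  have h' := scale (u - v)
  rw [hadd] at h
  rw [hsub] at h'
  rw [polarization]
  linear_combination (h + h' - 2 * scale u - 2 * scale v) / 4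

lemma norm_pow_four_mul_integral_norm_pow_four [FiniteDimensional ℝ E]
    (hF : IsRotationInvariant F) (hint : MemLp id 4 F) (u : E) :
    3 * ‖u‖ ^ 4 * ∫ x, ‖x‖ ^ 4 ∂F =
      finrank ℝ E * (finrank ℝ E + 2) * ∫ x, ⟪u, x⟫ ^ 4 ∂F := by
  let b := stdOrthonormalBasis ℝ E
  have expand (x : E) : ‖x‖ ^ 4 = ∑ i, ∑ j, ⟪b i, x⟫ ^ 2 * ⟪b j, x⟫ ^ 2 := by
    rw [← Finset.sum_mul_sum, b.sum_sq_inner_right]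
    ring
  have row (i) : ∑ j, (‖b i‖ ^ 2 * ‖b j‖ ^ 2 + 2 * ⟪b i, b j⟫ ^ 2) = (finrank ℝ E + 2 : ℝ) := by
    rw [Finset.sum_add_distrib, ← Finset.mul_sum, ← Finset.mul_sum, b.sum_sq_inner_left]
    simp
  have hint2 (i j) := integrable_inner_sq_mul_inner_sq hint (b i) (b j)
  calc 3 * ‖u‖ ^ 4 * ∫ x, ‖x‖ ^ 4 ∂F
      = ∑ i, ∑ j, 3 * ‖u‖ ^ 4 * ∫ x, ⟪b i, x⟫ ^ 2 * ⟪b j, x⟫ ^ 2 ∂F := by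
        simp only [expand]
        rw [integral_finsetSum _ fun i _ => integrable_finsetSum _ fun j _ => hint2 i j]
        simp only [integral_finsetSum _ fun j _ => hint2 _ j, Finset.mul_sum]
    _ = ∑ i, ∑ j, (‖b i‖ ^ 2 * ‖b j‖ ^ 2 + 2 * ⟪b i, b j⟫ ^ 2) * ∫ x, ⟪u, x⟫ ^ 4 ∂F := by
        simp only [hF.integral_inner_sq_mul_inner_sq hint]
    _ = finrank ℝ E * (finrank ℝ E + 2) * ∫ x, ⟪u, x⟫ ^ 4 ∂F := by
        simp only [← Finset.sum_mul, row, Finset.sum_const, Finset.card_univ, Fintype.card_fin,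
          nsmul_eq_mul]

section Sphere

variable [FiniteDimensional ℝ E] [IsProbabilityMeasure F] {u v : E}

lemma integral_inner_sq_eq_one (hF : IsRotationInvariant F)
    (hsphere : ∀ᵐ x ∂F, ‖x‖ ^ 2 = finrank ℝ E) (hu : ‖u‖ = 1) :
    ∫ x, ⟪u, x⟫ ^ 2 ∂F = 1 := by
  have : Nontrivial E := ⟨u, 0, by rintro rfl; simp at hu⟩
  have hn : (finrank ℝ E : ℝ) ≠ 0 := Nat.cast_ne_zero.2 finrank_pos.ne'
  have h := hF.norm_sq_mul_integral_norm_sq (memLp_id_of_ae_norm_sq_eq hsphere 2) u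
  rw [integral_congr_ae hsphere, hu, integral_const, probReal_univ, one_smul, one_pow,
    one_mul] at h
  exact (mul_eq_left₀ hn).1 h.symm

lemma integral_inner_pow_four_le_three (hF : IsRotationInvariant F)
    (hsphere : ∀ᵐ x ∂F, ‖x‖ ^ 2 = finrank ℝ E) (hu : ‖u‖ = 1) :
    ∫ x, ⟪u, x⟫ ^ 4 ∂F ≤ 3 := by
  have : Nontrivial E := ⟨u, 0, by rintro rfl; simp at hu⟩
  have hn : (0 : ℝ) < finrank ℝ E := Nat.cast_pos.2 finrank_pos
  have hsphere4 : ∀ᵐ x ∂F, ‖x‖ ^ 4 = (finrank ℝ E : ℝ) ^ 2 :=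
    hsphere.mono fun x hx => by rw [← hx]; ring
  have h := hF.norm_pow_four_mul_integral_norm_pow_four (memLp_id_of_ae_norm_sq_eq hsphere 4) u
  rw [integral_congr_ae hsphere4, hu, integral_const, probReal_univ, one_smul] at h
  nlinarith

lemma integral_abs_inner_le_one (hF : IsRotationInvariant F)
    (hsphere : ∀ᵐ x ∂F, ‖x‖ ^ 2 = finrank ℝ E) (hu : ‖u‖ = 1) :
    ∫ x, |⟪u, x⟫| ∂F ≤ 1 := by
  have h := sq_integral_abs_le ((memLp_id_of_ae_norm_sq_eq hsphere 2).const_inner u)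
  simp only [id] at h
  rw [hF.integral_inner_sq_eq_one hsphere hu] at h
  exact (sq_le_one_iff₀ (integral_nonneg fun x => abs_nonneg _)).1 h

lemma half_le_integral_abs_inner (hF : IsRotationInvariant F)
    (hsphere : ∀ᵐ x ∂F, ‖x‖ ^ 2 = finrank ℝ E) (hu : ‖u‖ = 1) :
    1 / 2 ≤ ∫ x, |⟪u, x⟫| ∂F := by
  have hLp := memLp_id_of_ae_norm_sq_eq hsphere
  have h := integral_sq_pow_three_le ((memLp_one_iff_integrable.1 (hLp 1)).const_inner u)
    (integrable_inner_pow (hLp 2) two_ne_zero u) (integrable_inner_pow (hLp 4) four_ne_zero u)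
  simp only [id] at h
  rw [hF.integral_inner_sq_eq_one hsphere hu, one_pow] at h
  have h3 := hF.integral_inner_pow_four_le_three hsphere hu
  have h0 : 0 ≤ ∫ x, |⟪u, x⟫| ∂F := integral_nonneg fun x => abs_nonneg _
  nlinarith [sq_nonneg (∫ x, |⟪u, x⟫| ∂F)]

lemma integral_signMismatch_inner_le_of_sphere (hF : IsRotationInvariant F)
    (hsphere : ∀ᵐ x ∂F, ‖x‖ ^ 2 = finrank ℝ E) (hu : ‖u‖ = 1) (hv : ‖v‖ = 1) :
    ∫ x, signMismatch ⟪u, x⟫ ⟪v, x⟫ ∂F ≤ 2⁻¹ * ‖u - v‖ ^ 2 := by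
  have hint := memLp_one_iff_integrable.1 (memLp_id_of_ae_norm_sq_eq hsphere 1)
  calc ∫ x, signMismatch ⟪u, x⟫ ⟪v, x⟫ ∂F
      ≤ ‖u - v‖ ^ 2 / 2 * ∫ x, |⟪u, x⟫| ∂F := hF.integral_signMismatch_inner_le hint hu hv
    _ ≤ ‖u - v‖ ^ 2 / 2 * 1 := by gcongr; exact hF.integral_abs_inner_le_one hsphere hu
    _ = 2⁻¹ * ‖u - v‖ ^ 2 := by ring

lemma le_integral_signMismatch_inner_of_sphere (hF : IsRotationInvariant F)
    (hsphere : ∀ᵐ x ∂F, ‖x‖ ^ 2 = finrank ℝ E) (hu : ‖u‖ = 1) (hv : ‖v‖ = 1) :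
    8⁻¹ * ‖u - v‖ ^ 2 ≤ ∫ x, signMismatch ⟪u, x⟫ ⟪v, x⟫ ∂F := by
  have hint := memLp_one_iff_integrable.1 (memLp_id_of_ae_norm_sq_eq hsphere 1)
  suffices ‖u - v‖ ^ 2 / 2 * (1 / 2) ≤ 2 * ∫ x, signMismatch ⟪u, x⟫ ⟪v, x⟫ ∂F by linarith
  calc ‖u - v‖ ^ 2 / 2 * (1 / 2)
      ≤ ‖u - v‖ ^ 2 / 2 * ∫ x, |⟪u, x⟫| ∂F := by
        gcongr; exact hF.half_le_integral_abs_inner hsphere hu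
    _ ≤ 2 * ∫ x, signMismatch ⟪u, x⟫ ⟪v, x⟫ ∂F :=
        hF.le_two_mul_integral_signMismatch_inner hint hu hv

end Sphere

end IsRotationInvariant

end RotationInvariant

section Coordinates

variable {d : ℕ}

lemma eNorm_eq_norm_toLp (x : Fin d → ℝ) : eNorm x = ‖WithLp.toLp 2 x‖ := by
  simp [eNorm, EuclideanSpace.norm_eq]

lemma inner_toLp_eq_dotProduct (x y : Fin d → ℝ) :
    ⟪WithLp.toLp 2 x, WithLp.toLp 2 y⟫ = x ⬝ᵥ y := by
  simp [EuclideanSpace.inner_toLp_toLp, dotProduct_comm]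

lemma integral_signMismatch_dotProduct {Ω : Type*} [MeasurableSpace Ω] {μ : Measure Ω}
    {Ψ : Ω → Fin d → ℝ} (hΨ : AEMeasurable Ψ μ) (u v : Fin d → ℝ) :
    ∫ ω, signMismatch (u ⬝ᵥ Ψ ω) (v ⬝ᵥ Ψ ω) ∂μ =
      ∫ x, signMismatch ⟪WithLp.toLp 2 u, x⟫ ⟪WithLp.toLp 2 v, x⟫
        ∂(μ.map Ψ).map (WithLp.toLp 2) := by
  rw [AEMeasurable.map_map_of_aemeasurable (by fun_prop) hΨ, integral_map (by fun_prop)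
    (measurable_signMismatch_inner _ _).aestronglyMeasurable]
  simp only [Function.comp_apply, inner_toLp_eq_dotProduct]

namespace IsUniformOnSphere

variable {F : Measure (Fin d → ℝ)}

lemma isRotationInvariant_map_toLp (hF : IsUniformOnSphere d F) :
    IsRotationInvariant (F.map (WithLp.toLp 2)) := by
  intro L
  let b := EuclideanSpace.basisFun (Fin d) ℝ
  let O := LinearMap.toMatrix b.toBasis b.toBasis L.toLinearEquiv
  have hO : Oᵀ * O = 1 := Matrix.mem_unitaryGroup_iff'.1 (L.toMatrix_mem_unitaryGroup b b)
  have hLO (x : Fin d → ℝ) : L (WithLp.toLp 2 x) = WithLp.toLp 2 (O *ᵥ x) := by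
    have h := LinearMap.toMatrix_mulVec_repr b.toBasis b.toBasis L.toLinearEquiv (WithLp.toLp 2 x)
    exact congrArg (WithLp.toLp 2) h.symm
  have hOm : Measurable fun x : Fin d → ℝ => O *ᵥ x := by fun_prop
  conv_rhs => rw [← hF.2.2 O hO]
  rw [Measure.map_map (by fun_prop) (by fun_prop), Measure.map_map (by fun_prop) hOm]
  congr 1
  exact funext hLO

lemma ae_map_toLp_norm_sq_eq (hF : IsUniformOnSphere d F) :
    ∀ᵐ x ∂F.map (WithLp.toLp 2), ‖x‖ ^ 2 = finrank ℝ (EuclideanSpace ℝ (Fin d)) := by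
  have := hF.1
  have hm : MeasurableSet {x : Fin d → ℝ | ∑ i, x i ^ 2 = (d : ℝ)} :=
    measurableSet_eq_fun (by fun_prop) measurable_const
  rw [ae_map_iff (by fun_prop) (measurableSet_eq_fun (by fun_prop) measurable_const)]
  filter_upwards [(mem_ae_iff_prob_eq_one hm).2 hF.2.1] with x hx
  rw [EuclideanSpace.real_norm_sq_eq, finrank_euclideanSpace_fin]
  exact hx

end IsUniformOnSphere

end Coordinates

theorem stmt_15_general {d : ℕ} {Ω : Type*} [MeasurableSpace Ω] {μ : Measure Ω}
    {Ψ : Ω → Fin d → ℝ} (hF : IsUniformOnSphere d (μ.map Ψ)) {u v : Fin d → ℝ}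
    (hu : eNorm u = 1) (hv : eNorm v = 1) :
    8⁻¹ * eNorm (u - v) ^ 2 ≤ ∫ ω, signMismatch (u ⬝ᵥ Ψ ω) (v ⬝ᵥ Ψ ω) ∂μ ∧
      ∫ ω, signMismatch (u ⬝ᵥ Ψ ω) (v ⬝ᵥ Ψ ω) ∂μ ≤ 2⁻¹ * eNorm (u - v) ^ 2 := by
  have := hF.1
  have hΨ : AEMeasurable Ψ μ := .of_map_ne_zero (IsProbabilityMeasure.ne_zero _)
  have hrot := hF.isRotationInvariant_map_toLp
  have hsphere := hF.ae_map_toLp_norm_sq_eq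
  have : IsProbabilityMeasure ((μ.map Ψ).map (WithLp.toLp 2)) :=
    Measure.isProbabilityMeasure_map (by fun_prop)
  rw [eNorm_eq_norm_toLp] at hu hv
  rw [eNorm_eq_norm_toLp, WithLp.toLp_sub, integral_signMismatch_dotProduct hΨ]
  exact ⟨hrot.le_integral_signMismatch_inner_of_sphere hsphere hu hv,
    hrot.integral_signMismatch_inner_le_of_sphere hsphere hu hv⟩

/-- If `Ψ` is uniform on the sphere of radius `√d` in `ℝ^d`, `d ≥ 3`, then
there is an absolute constant `C > 0` such that for all unit vectors `u, v`,
`C⁻¹ ‖u − v‖² ≤ E[|u'Ψ| · 1(sgn(u'Ψ) ≠ sgn(v'Ψ))] ≤ √2 ‖u − v‖²`. -/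
theorem stmt_15 :
    ∃ C : ℝ, 0 < C ∧
      ∀ (d : ℕ), 3 ≤ d →
      ∀ (Ω : Type) (_ : MeasurableSpace Ω) (μ : Measure Ω), IsProbabilityMeasure μ →
      ∀ (Ψ : Ω → Fin d → ℝ), Measurable Ψ →
        IsUniformOnSphere d (μ.map Ψ) →
        ∀ u v : Fin d → ℝ, eNorm u = 1 → eNorm v = 1 →
          C⁻¹ * eNorm (u - v) ^ 2
              ≤ ∫ ω, |u ⬝ᵥ Ψ ω| *
                  (if Real.sign (u ⬝ᵥ Ψ ω) = Real.sign (v ⬝ᵥ Ψ ω) then 0 else 1) ∂μ ∧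
            ∫ ω, |u ⬝ᵥ Ψ ω| *
                  (if Real.sign (u ⬝ᵥ Ψ ω) = Real.sign (v ⬝ᵥ Ψ ω) then 0 else 1) ∂μ
              ≤ Real.sqrt 2 * eNorm (u - v) ^ 2 := by
  refine ⟨8, by norm_num, fun d _ Ω _ μ _ Ψ _ hF u v hu hv => ?_⟩
  have hsqrt : (2 : ℝ)⁻¹ ≤ √2 := by linarith [Real.one_le_sqrt.2 (by norm_num : (1 : ℝ) ≤ 2)]
  exact (stmt_15_general hF hu hv).imp_right (·.trans (by gcongr))
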